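/- Let d > 4 be an integer. (i) There exist constants 0 < c ≤ C, depending only on d, such that for all x ∈ ℤ^d: c·(g⋆g)(x) ≤ Σ_{k≥1} k·P(X_k = x) ≤ C·(g⋆g)(x); consequently, for every α ∈ (0,1), Σ_{k≥1} k·(1−α)^k·P(X_k = x) ≤ C·(g⋆g)(x). (ii) For every c₀ > 0 there exist constants c₁ > 0, C′ > 0 and α₀ ∈ (0,1), depending only on d and c₀, such that for all α ∈ (0, α₀) and all x ∈ ℤ^d with ‖x‖ ≥ c₀/√α: Σ_{k≥1} k·(1−α)^k·P(X_k = x) ≤ C′·e^{−c₁·‖x‖·√α}·(g⋆g)(x). -/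

import Mathlib

/-!
The Chapman–Kolmogorov equation gives `(g⋆g)(x) = ∑ (k + 1) P(X_k = x)`, so the first part reduces
to comparing the weights `k` and `k + 1`; the term `k = 0` is nonzero only at `x = 0`, where it is
controlled by the return probability at time two.

For the second part let `r = ‖x‖`. The Poissonized walk, which jumps at rate `2d`, has independent
coordinates: its kernel `p_s(x)` is the product over `i` of the laws at `x i` of the difference of
two independent Poisson variables of mean `s`. On the level of exponential generating functions
this holds because path counts and products of one-dimensional path counts satisfy the same
differential equation. Up to constants, `∫ s p_s(x) ds` is a lower bound for `g⋆g` and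
`∫ s e^{-αs} p_s(x) ds` an upper bound for the killed sum, so it suffices to compare the two
integrals with `r^{4-d}`.

By Stirling's formula, Poisson weights of mean `μ` are at most `1 / √μ`, and at least a multiple of
it just above the mean. Hence `p_s(x)` is at least of order `r^{-d}` for `s` in `[r², 2r²]`, and
`g⋆g` at least of order `r^{4-d}`. In the other direction, exponential tilting in the direction
of `x` gives `p_s(x) ≤ s^{-d/2} e^{2sl² - lr}` for every `l` in `[0, 1]`. For `s ≤ r²` the best
choice of `l` and the killing together produce `r^{-d} e^{-√α r / 4}`, by the arithmetic-geometric
mean inequality. For `s ≥ r²` the killing alone gives `e^{-αr²}`, which is at most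
`e^{-c₀ √α r}` when `√α r ≥ c₀`, and the integral of `s^{1 - d/2}` converges because `d > 4`.
-/

open Filter

noncomputable section

/-- `srwP d k x` is the probability that the simple random walk on `ℤ^d`
started at `0` is at `x` at time `k`. -/
def srwP (d : ℕ) : ℕ → (Fin d → ℤ) → ENNReal
  | 0, x => if x = 0 then 1 else 0
  | k + 1, x =>
      (2 * d : ENNReal)⁻¹ *
        ∑ i : Fin d, (srwP d k (x - Pi.single i 1) + srwP d k (x + Pi.single i 1))

/-- The Euclidean norm on `ℤ^d`. -/
def nrmZ (d : ℕ) (x : Fin d → ℤ) : ℝ := Real.sqrt (∑ i, ((x i : ℝ)) ^ 2)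

/-- The Green's function of the simple random walk on `ℤ^d`. -/
def green (d : ℕ) (x : Fin d → ℤ) : ENNReal := ∑' k : ℕ, srwP d k x

/-- Convolution of two `[0,∞]`-valued functions on `ℤ^d`. -/
def convE (d : ℕ) (f h : (Fin d → ℤ) → ENNReal) (z : Fin d → ℤ) : ENNReal :=
  ∑' x, f x * h (z - x)

open MeasureTheory
open Finset.HasAntidiagonal (antidiagonal mem_antidiagonal)
open scoped ENNReal

/-! ### Convolution of Green's functions -/

lemma tsum_tsum_eq_tsum_sum_antidiagonal {A : Type*} [AddMonoid A] [Finset.HasAntidiagonal A]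
    (F : A → A → ℝ≥0∞) :
    ∑' a, ∑' b, F a b = ∑' n, ∑ p ∈ antidiagonal n, F p.1 p.2 := by
  rw [← ENNReal.tsum_prod, ← Finset.HasAntidiagonal.sigmaAntidiagonalEquivProd.tsum_eq,
    ENNReal.tsum_sigma']
  exact tsum_congr fun n => Finset.tsum_subtype (antidiagonal n) fun p => F p.1 p.2

lemma tsum_comp_sub_mul {G : Type*} [AddCommGroup G] (f h : G → ℝ≥0∞) (x e : G) :
    ∑' y, f (y - e) * h (x - y) = ∑' y, f y * h (x - e - y) := by
  rw [← (Equiv.addRight e).tsum_eq]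
  simp only [Equiv.coe_addRight, add_sub_cancel_right, sub_add_eq_sub_sub_swap]

lemma two_mul_mul_srwP_succ (d k : ℕ) (x : Fin d → ℤ) :
    2 * d * srwP d (k + 1) x =
      ∑ i, (srwP d k (x - Pi.single i 1) + srwP d k (x + Pi.single i 1)) := by
  rcases d.eq_zero_or_pos with rfl | hd
  · simp
  · rw [srwP, ← mul_assoc, ENNReal.mul_inv_cancel (by positivity) (by finiteness), one_mul]

lemma convE_srwP (d j k : ℕ) (x : Fin d → ℤ) :
    convE d (srwP d j) (srwP d k) x = srwP d (j + k) x := by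
  induction j generalizing x with
  | zero =>
    rw [zero_add, convE, tsum_eq_single 0 fun y hy => by simp [srwP, hy]]
    simp [srwP]
  | succ j ih =>
    have backward (e : Fin d → ℤ) :
        ∑' y, srwP d j (y - e) * srwP d k (x - y) = srwP d (j + k) (x - e) := by
      rw [tsum_comp_sub_mul, ← ih, convE]
    have forward (e : Fin d → ℤ) :
        ∑' y, srwP d j (y + e) * srwP d k (x - y) = srwP d (j + k) (x + e) := by
      simpa using backward (-e)
    simp only [convE, add_right_comm j 1 k, srwP, mul_assoc, Finset.sum_mul, add_mul,
      ENNReal.tsum_mul_left]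
    rw [Summable.tsum_finsetSum fun _ _ => ENNReal.summable]
    simp only [ENNReal.tsum_add, backward, forward]

lemma convE_green (d : ℕ) (x : Fin d → ℤ) :
    convE d (green d) (green d) x = ∑' k : ℕ, ((k : ℝ≥0∞) + 1) * srwP d k x :=
  calc convE d (green d) (green d) x
    _ = ∑' j, ∑' k, convE d (srwP d j) (srwP d k) x := by
      simp only [convE, green, ← ENNReal.tsum_mul_right]
      rw [ENNReal.tsum_comm]
      refine tsum_congr fun j => ?_
      simp only [← ENNReal.tsum_mul_left]
      exact ENNReal.tsum_comm
    _ = ∑' n, ∑ p ∈ antidiagonal n, srwP d (p.1 + p.2) x := by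
      simp only [convE_srwP]
      exact tsum_tsum_eq_tsum_sum_antidiagonal fun j k => srwP d (j + k) x
    _ = ∑' n : ℕ, ((n : ℝ≥0∞) + 1) * srwP d n x := by
      refine tsum_congr fun n => ?_
      rw [Finset.sum_congr rfl fun p hp => by rw [mem_antidiagonal.1 hp]]
      simp

lemma tsum_natCast_mul_srwP_le_convE_green (d : ℕ) (x : Fin d → ℤ) :
    ∑' k : ℕ, (k : ℝ≥0∞) * srwP d k x ≤ convE d (green d) (green d) x := by
  rw [convE_green]
  gcongr
  exact le_self_add

lemma tsum_killed_le {α : ℝ} (hα₀ : 0 ≤ α) (hα₁ : α ≤ 1) (p : ℕ → ℝ≥0∞) :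
    ∑' k : ℕ, (k : ℝ≥0∞) * ENNReal.ofReal ((1 - α) ^ k) * p k ≤
      ∑' k : ℕ, (k : ℝ≥0∞) * p k := by
  gcongr with k
  refine mul_le_of_le_one_right zero_le (ENNReal.ofReal_le_one.2 ?_)
  exact pow_le_one₀ (by linarith) (by linarith)

lemma srwP_le_two_mul_mul_srwP_succ_add_single {d : ℕ} (k : ℕ) (x : Fin d → ℤ) (i : Fin d) :
    srwP d k x ≤ 2 * d * srwP d (k + 1) (x + Pi.single i 1) := by
  rw [two_mul_mul_srwP_succ]
  refine le_trans ?_ (Finset.single_le_sum (fun _ _ => zero_le) (Finset.mem_univ i))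
  simp

lemma srwP_le_two_mul_mul_srwP_succ_sub_single {d : ℕ} (k : ℕ) (x : Fin d → ℤ) (i : Fin d) :
    srwP d k x ≤ 2 * d * srwP d (k + 1) (x - Pi.single i 1) := by
  rw [two_mul_mul_srwP_succ]
  refine le_trans ?_ (Finset.single_le_sum (fun _ _ => zero_le) (Finset.mem_univ i))
  simp

lemma srwP_le_mul_srwP_add_two {d : ℕ} (hd : 0 < d) (k : ℕ) (x : Fin d → ℤ) :
    srwP d k x ≤ (2 * d) ^ 2 * srwP d (k + 2) x := by
  let i : Fin d := ⟨0, hd⟩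
  calc srwP d k x
    _ ≤ 2 * d * srwP d (k + 1) (x + Pi.single i 1) :=
      srwP_le_two_mul_mul_srwP_succ_add_single k x i
    _ ≤ 2 * d * (2 * d * srwP d (k + 1 + 1) (x + Pi.single i 1 - Pi.single i 1)) := by
      gcongr
      exact srwP_le_two_mul_mul_srwP_succ_sub_single (k + 1) (x + Pi.single i 1) i
    _ = (2 * d) ^ 2 * srwP d (k + 2) x := by rw [add_sub_cancel_right]; ring

/-- Only the term `k = 0` of `∑ (k + 1) P(X_k = x)` is not dominated by twice the corresponding
term of `∑ k P(X_k = x)`; it is controlled by the term `k = 2`. -/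
lemma convE_green_le_mul_tsum {d : ℕ} (hd : 0 < d) (x : Fin d → ℤ) :
    convE d (green d) (green d) x ≤
      (2 * d ^ 2 + 2) * ∑' k : ℕ, (k : ℝ≥0∞) * srwP d k x := by
  set S := ∑' k : ℕ, (k : ℝ≥0∞) * srwP d k x
  have initial : srwP d 0 x ≤ 2 * d ^ 2 * S :=
    calc srwP d 0 x
      _ ≤ (2 * d) ^ 2 * srwP d (0 + 2) x := srwP_le_mul_srwP_add_two hd 0 x
      _ = 2 * d ^ 2 * ((2 : ℕ) * srwP d 2 x) := by rw [zero_add]; push_cast; ring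
      _ ≤ 2 * d ^ 2 * S := by gcongr; exact ENNReal.le_tsum 2
  have later : ∑' k : ℕ, (((k + 1 : ℕ) : ℝ≥0∞) + 1) * srwP d (k + 1) x ≤ 2 * S :=
    calc ∑' k : ℕ, (((k + 1 : ℕ) : ℝ≥0∞) + 1) * srwP d (k + 1) x
      _ ≤ ∑' k : ℕ, 2 * (((k + 1 : ℕ) : ℝ≥0∞) * srwP d (k + 1) x) := by
        refine ENNReal.tsum_le_tsum fun k => ?_
        rw [← mul_assoc]
        gcongr
        exact_mod_cast (by omega : k + 1 + 1 ≤ 2 * (k + 1))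
      _ = 2 * ∑' k : ℕ, ((k + 1 : ℕ) : ℝ≥0∞) * srwP d (k + 1) x := ENNReal.tsum_mul_left
      _ ≤ 2 * S := by
        gcongr
        exact ENNReal.tsum_comp_le_tsum_of_injective (add_left_injective 1) _
  rw [convE_green, tsum_eq_zero_add' ENNReal.summable, add_mul _ _ S, Nat.cast_zero, zero_add,
    one_mul]
  exact add_le_add initial later

lemma ofReal_mul_convE_green_le_tsum {d : ℕ} (hd : 0 < d) (x : Fin d → ℤ) :
    ENNReal.ofReal (1 / (2 * d ^ 2 + 2)) * convE d (green d) (green d) x ≤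
      ∑' k : ℕ, (k : ℝ≥0∞) * srwP d k x := by
  have coe_eq : (2 * d ^ 2 + 2 : ℝ≥0∞) = ENNReal.ofReal (2 * d ^ 2 + 2) := by
    exact_mod_cast (ENNReal.ofReal_natCast (2 * d ^ 2 + 2)).symm
  grw [convE_green_le_mul_tsum hd, coe_eq, ← mul_assoc, ← ENNReal.ofReal_mul (by positivity),
    one_div_mul_cancel (by positivity), ENNReal.ofReal_one, one_mul]

/-! ### The product formula for the Poissonized walk -/

/-- Evaluation at `s` of formal power series with coefficients in `[0,∞]`, where convergence is
not an issue. -/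
def evalSeries (s : ℝ≥0∞) : PowerSeries ℝ≥0∞ →* ℝ≥0∞ where
  toFun f := ∑' k, PowerSeries.coeff k f * s ^ k
  map_one' := by
    rw [tsum_eq_single 0 fun k hk => by simp [PowerSeries.coeff_one, hk]]
    simp
  map_mul' f g := by
    simp_rw [← ENNReal.tsum_mul_right, ← ENNReal.tsum_mul_left]
    rw [tsum_tsum_eq_tsum_sum_antidiagonal fun a b =>
      PowerSeries.coeff a f * s ^ a * (PowerSeries.coeff b g * s ^ b)]
    refine tsum_congr fun n => ?_
    rw [PowerSeries.coeff_mul, Finset.sum_mul]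
    refine Finset.sum_congr rfl fun p hp => ?_
    rw [← mem_antidiagonal.1 hp, pow_add, mul_mul_mul_comm]

lemma evalSeries_apply (s : ℝ≥0∞) (f : PowerSeries ℝ≥0∞) :
    evalSeries s f = ∑' k, PowerSeries.coeff k f * s ^ k := rfl

/-- The exponential generating function of the number of nearest-neighbour paths in `ℤ` from `0`
to `n`: a path with `a` up-steps and `b` down-steps contributes to the coefficient of `T ^ (a + b)`,
and there are `(a + b)! / (a! b!)` of them. -/
def lineSeries (n : ℤ) : PowerSeries ℝ≥0∞ :=
  PowerSeries.mk fun k => ∑ p ∈ antidiagonal k,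
    if (p.1 : ℤ) - p.2 = n then (p.1.factorial : ℝ≥0∞)⁻¹ * (p.2.factorial : ℝ≥0∞)⁻¹ else 0

lemma natCast_succ_mul_inv_factorial_succ (a : ℕ) :
    ((a + 1 : ℕ) : ℝ≥0∞) * ((a + 1).factorial : ℝ≥0∞)⁻¹ = (a.factorial : ℝ≥0∞)⁻¹ := by
  rw [Nat.factorial_succ, Nat.cast_mul, ENNReal.mul_inv (by simp) (by simp), ← mul_assoc,
    ENNReal.mul_inv_cancel (by positivity) (by finiteness), one_mul]

lemma derivative_lineSeries (n : ℤ) :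
    PowerSeries.derivative ℝ≥0∞ (lineSeries n) = lineSeries (n - 1) + lineSeries (n + 1) := by
  ext k
  rw [PowerSeries.coeff_derivative, map_add]
  simp only [lineSeries, PowerSeries.coeff_mk]
  set F : ℕ × ℕ → ℝ≥0∞ := fun p => if (p.1 : ℤ) - p.2 = n then
    (p.1.factorial : ℝ≥0∞)⁻¹ * (p.2.factorial : ℝ≥0∞)⁻¹ else 0 with hF
  have split_degree : (∑ p ∈ antidiagonal (k + 1), F p) * ((k : ℝ≥0∞) + 1) =
      ∑ p ∈ antidiagonal (k + 1), p.1 * F p + ∑ p ∈ antidiagonal (k + 1), p.2 * F p := by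
    rw [← Finset.sum_add_distrib, Finset.sum_mul]
    refine Finset.sum_congr rfl fun p hp => ?_
    rw [← add_mul, mul_comm, ← Nat.cast_add, mem_antidiagonal.1 hp, Nat.cast_succ]
  have up (p : ℕ × ℕ) : ((p.1 + 1 : ℕ) : ℝ≥0∞) * F (p.1 + 1, p.2) =
      if (p.1 : ℤ) - p.2 = n - 1 then
        (p.1.factorial : ℝ≥0∞)⁻¹ * (p.2.factorial : ℝ≥0∞)⁻¹ else 0 := by
    simp only [hF, mul_ite, mul_zero, ← mul_assoc, natCast_succ_mul_inv_factorial_succ]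
    congr 1
    grind
  have down (p : ℕ × ℕ) : ((p.2 + 1 : ℕ) : ℝ≥0∞) * F (p.1, p.2 + 1) =
      if (p.1 : ℤ) - p.2 = n + 1 then
        (p.1.factorial : ℝ≥0∞)⁻¹ * (p.2.factorial : ℝ≥0∞)⁻¹ else 0 := by
    simp only [hF, mul_ite, mul_zero, mul_left_comm _ (p.1.factorial : ℝ≥0∞)⁻¹,
      natCast_succ_mul_inv_factorial_succ]
    congr 1
    grind
  rw [split_degree, Finset.Nat.sum_antidiagonal_succ, Finset.Nat.sum_antidiagonal_succ']
  simp only [up, down, Nat.cast_zero, zero_mul, zero_add]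

lemma derivation_prod {R A M ι : Type*} [CommSemiring R] [CommSemiring A] [AddCommMonoid M]
    [Algebra R A] [Module A M] [Module R M] [DecidableEq ι] (D : Derivation R A M)
    (s : Finset ι) (f : ι → A) :
    D (∏ i ∈ s, f i) = ∑ i ∈ s, (∏ j ∈ s.erase i, f j) • D (f i) := by
  induction s using Finset.induction_on with
  | empty => simp
  | insert a s ha ih =>
    rw [Finset.prod_insert ha, Derivation.leibniz, ih, Finset.sum_insert ha,
      Finset.erase_insert ha, add_comm, Finset.smul_sum]
    congr 1
    refine Finset.sum_congr rfl fun i hi => ?_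
    rw [Finset.erase_insert_of_ne (ne_of_mem_of_not_mem hi ha).symm,
      Finset.prod_insert (by simp [ha]), mul_smul]

lemma derivative_prod_lineSeries {ι : Type*} [Fintype ι] [DecidableEq ι] (x : ι → ℤ) :
    PowerSeries.derivative ℝ≥0∞ (∏ i, lineSeries (x i)) =
      ∑ i, (∏ j, lineSeries ((x - Pi.single i 1 : ι → ℤ) j) +
        ∏ j, lineSeries ((x + Pi.single i 1 : ι → ℤ) j)) := by
  have factor (y : ι → ℤ) (i : ι) (hy : ∀ j ≠ i, y j = x j) : ∏ j, lineSeries (y j) =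
      (∏ j ∈ Finset.univ.erase i, lineSeries (x j)) * lineSeries (y i) := by
    rw [← Finset.prod_erase_mul _ _ (Finset.mem_univ i)]
    congr 1
    exact Finset.prod_congr rfl fun j hj => by rw [hy j (Finset.ne_of_mem_erase hj)]
  rw [derivation_prod]
  refine Finset.sum_congr rfl fun i _ => ?_
  rw [derivative_lineSeries, smul_eq_mul, mul_add,
    factor (x - Pi.single i 1) i fun j hj => by simp [hj],
    factor (x + Pi.single i 1) i fun j hj => by simp [hj]]
  simp

lemma constantCoeff_lineSeries (n : ℤ) :
    PowerSeries.constantCoeff (lineSeries n) = if n = 0 then 1 else 0 := by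
  simp [lineSeries, ← PowerSeries.coeff_zero_eq_constantCoeff_apply, eq_comm]

/-- The definition of the walk and the differential equation of the product are the same recursion
in `k`. -/
lemma coeff_prod_lineSeries_mul_factorial (d k : ℕ) (x : Fin d → ℤ) :
    PowerSeries.coeff k (∏ i, lineSeries (x i)) * k.factorial = (2 * d) ^ k * srwP d k x := by
  induction k generalizing x with
  | zero =>
    simp [srwP, map_prod, constantCoeff_lineSeries, Finset.prod_ite_zero, funext_iff]
  | succ k ih =>
    calc PowerSeries.coeff (k + 1) (∏ i, lineSeries (x i)) * ((k + 1).factorial : ℝ≥0∞)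
      _ = PowerSeries.coeff k (PowerSeries.derivative ℝ≥0∞ (∏ i, lineSeries (x i))) *
          k.factorial := by
        rw [PowerSeries.coeff_derivative, Nat.factorial_succ]
        push_cast
        ring
      _ = (2 * d) ^ k * ∑ i, (srwP d k (x - Pi.single i 1) + srwP d k (x + Pi.single i 1)) := by
        simp only [derivative_prod_lineSeries, map_sum, map_add, Finset.sum_mul, add_mul, ih,
          Finset.mul_sum, mul_add]
      _ = (2 * d) ^ (k + 1) * srwP d (k + 1) x := by
        rw [← two_mul_mul_srwP_succ, pow_succ, mul_assoc _ (2 * d : ℝ≥0∞)]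

lemma coeff_prod_lineSeries (d k : ℕ) (x : Fin d → ℤ) :
    PowerSeries.coeff k (∏ i, lineSeries (x i)) =
      (2 * d) ^ k * srwP d k x * (k.factorial : ℝ≥0∞)⁻¹ := by
  rw [← coeff_prod_lineSeries_mul_factorial, mul_assoc,
    ENNReal.mul_inv_cancel (by positivity) (by finiteness), mul_one]

/-- The probability that a Poisson variable of mean `μ` equals `k`. -/
def poissonWeight (μ : ℝ) (k : ℕ) : ℝ := Real.exp (-μ) * μ ^ k / k.factorial

/-- The probability that the difference of two independent Poisson variables of means `μ` and `ν`
equals `n`. -/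
def skellam (μ ν : ℝ) (n : ℤ) : ℝ≥0∞ :=
  ∑' a : ℕ, ∑' b : ℕ,
    if (a : ℤ) - b = n then ENNReal.ofReal (poissonWeight μ a * poissonWeight ν b) else 0

/-- The law at time `s` of the simple random walk in continuous time that jumps at rate `2 * d`,
so that each of its `2 * d` kinds of steps occurs at rate one. -/
def heat (d : ℕ) (s : ℝ) (x : Fin d → ℤ) : ℝ≥0∞ :=
  ∑' k : ℕ, ENNReal.ofReal (poissonWeight (2 * d * s) k) * srwP d k x

lemma poissonWeight_nonneg {μ : ℝ} (hμ : 0 ≤ μ) (k : ℕ) : 0 ≤ poissonWeight μ k := by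
  unfold poissonWeight
  positivity

lemma ofReal_poissonWeight {μ : ℝ} (hμ : 0 ≤ μ) (k : ℕ) :
    ENNReal.ofReal (poissonWeight μ k) =
      ENNReal.ofReal (Real.exp (-μ)) * ENNReal.ofReal μ ^ k * (k.factorial : ℝ≥0∞)⁻¹ := by
  rw [poissonWeight, ENNReal.ofReal_div_of_pos (by positivity),
    ENNReal.ofReal_mul (by positivity), ENNReal.ofReal_pow hμ, ENNReal.ofReal_natCast,
    div_eq_mul_inv]

lemma skellam_self_eq_evalSeries {s : ℝ} (hs : 0 ≤ s) (n : ℤ) :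
    skellam s s n =
      ENNReal.ofReal (Real.exp (-s)) ^ 2 * evalSeries (ENNReal.ofReal s) (lineSeries n) := by
  rw [skellam, tsum_tsum_eq_tsum_sum_antidiagonal fun a b : ℕ => if (a : ℤ) - b = n then
    ENNReal.ofReal (poissonWeight s a * poissonWeight s b) else 0, evalSeries_apply,
    ← ENNReal.tsum_mul_left]
  simp only [lineSeries, PowerSeries.coeff_mk, Finset.sum_mul, Finset.mul_sum]
  refine tsum_congr fun k => Finset.sum_congr rfl fun p hp => ?_
  rw [ENNReal.ofReal_mul (poissonWeight_nonneg hs _), ofReal_poissonWeight hs,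
    ofReal_poissonWeight hs, ← mem_antidiagonal.1 hp]
  split_ifs <;> ring

lemma heat_eq_prod (d : ℕ) {s : ℝ} (hs : 0 ≤ s) (x : Fin d → ℤ) :
    heat d s x = ∏ i, skellam s s (x i) := by
  have mean : ENNReal.ofReal (2 * d * s) = 2 * d * ENNReal.ofReal s := by
    rw [ENNReal.ofReal_mul (by positivity), ENNReal.ofReal_mul zero_le_two]
    simp
  have mass : ENNReal.ofReal (Real.exp (-(2 * d * s))) =
      (ENNReal.ofReal (Real.exp (-s)) ^ 2) ^ d := by
    rw [← pow_mul, ← ENNReal.ofReal_pow (by positivity), ← Real.exp_nat_mul]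
    push_cast
    ring_nf
  simp only [skellam_self_eq_evalSeries hs, Finset.prod_mul_distrib, ← map_prod,
    Finset.prod_const, Finset.card_univ, Fintype.card_fin]
  rw [heat, evalSeries_apply, ← ENNReal.tsum_mul_left]
  refine tsum_congr fun k => ?_
  rw [coeff_prod_lineSeries, ofReal_poissonWeight (by positivity), mean, mass, mul_pow]
  ring

/-! ### Poisson weights -/

lemma tsum_ofReal_poissonWeight {μ : ℝ} (hμ : 0 ≤ μ) :
    ∑' k, ENNReal.ofReal (poissonWeight μ k) = 1 := by
  have total : HasSum (poissonWeight μ) 1 :=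
    ProbabilityTheory.hasSum_one_poissonMeasure ⟨μ, hμ⟩
  rw [← ENNReal.ofReal_tsum_of_nonneg (poissonWeight_nonneg hμ) total.summable, total.tsum_eq,
    ENNReal.ofReal_one]

lemma poissonWeight_le_one {μ : ℝ} (hμ : 0 ≤ μ) (k : ℕ) : poissonWeight μ k ≤ 1 := by
  rw [← ENNReal.ofReal_le_one, ← tsum_ofReal_poissonWeight hμ]
  exact ENNReal.le_tsum k

lemma le_mul_exp_div_sub_one (x : ℝ) {y : ℝ} (hy : 0 < y) : x ≤ y * Real.exp (x / y - 1) := by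
  rw [← div_le_iff₀' hy]
  linarith [Real.add_one_le_exp (x / y - 1)]

lemma pow_le_pow_mul_exp {x y : ℝ} (hx : 0 ≤ x) (hy : 0 < y) (k : ℕ) :
    x ^ k ≤ y ^ k * Real.exp (k * (x / y - 1)) := by
  rw [Real.exp_nat_mul, ← mul_pow]
  exact pow_le_pow_left₀ hx (le_mul_exp_div_sub_one x hy) k

lemma sqrt_le_sqrt_mul_exp (x : ℝ) {y : ℝ} (hy : 0 < y) :
    √x ≤ √y * Real.exp ((x / y - 1) / 2) := by
  rw [Real.exp_half, ← Real.sqrt_mul hy.le]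
  exact Real.sqrt_le_sqrt (le_mul_exp_div_sub_one x hy)

/-- The left-hand side is largest at `μ = k + 1 / 2`. -/
lemma sqrt_mul_pow_mul_exp_neg_le {μ : ℝ} (hμ : 0 ≤ μ) (k : ℕ) :
    √μ * μ ^ k * Real.exp (-μ) ≤
      √(k + 1 / 2) * (k + 1 / 2) ^ k * Real.exp (-(k + 1 / 2)) := by
  set c : ℝ := k + 1 / 2 with hc
  have c_pos : 0 < c := by positivity
  calc √μ * μ ^ k * Real.exp (-μ)
    _ ≤ (√c * Real.exp ((μ / c - 1) / 2)) * (c ^ k * Real.exp (k * (μ / c - 1))) *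
        Real.exp (-μ) := by
      gcongr
      · exact sqrt_le_sqrt_mul_exp μ c_pos
      · exact pow_le_pow_mul_exp hμ c_pos k
    _ = √c * c ^ k *
        Real.exp ((μ / c - 1) / 2 + k * (μ / c - 1) + -μ) := by
      rw [Real.exp_add, Real.exp_add]
      ring
    _ = √c * c ^ k * Real.exp (-c) := by
      congr 2
      field_simp
      rw [hc]
      ring

lemma sqrt_mul_pow_mul_exp_neg_le_factorial (k : ℕ) :
    √(k + 1 / 2) * (k + 1 / 2) ^ k * Real.exp (-(k + 1 / 2)) ≤ k.factorial := by
  rcases k.eq_zero_or_pos with rfl | hk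
  · have sqrt_le : √(1 / 2) ≤ 1 := Real.sqrt_le_one.2 (by norm_num)
    simpa using mul_le_one₀ sqrt_le (Real.exp_nonneg _) (Real.exp_le_one_iff.2 (by norm_num))
  have k_ge : (1 : ℝ) ≤ k := by exact_mod_cast hk
  calc √(k + 1 / 2) * (k + 1 / 2) ^ k * Real.exp (-(k + 1 / 2))
    _ ≤ √(2 * Real.pi * k) * ((k : ℝ) ^ k * Real.exp (k * ((k + 1 / 2) / k - 1))) *
        Real.exp (-(k + 1 / 2)) := by
      gcongr
      · nlinarith [Real.pi_gt_three]
      · exact pow_le_pow_mul_exp (by positivity) (by positivity) k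
    _ = √(2 * Real.pi * k) * (k : ℝ) ^ k * Real.exp (-k) := by
      rw [← mul_assoc, mul_assoc _ (Real.exp _), ← Real.exp_add]
      congr 2
      field_simp
      ring
    _ = √(2 * Real.pi * k) * (k / Real.exp 1) ^ k := by
      rw [div_pow, ← Real.exp_nat_mul, mul_one, Real.exp_neg, mul_assoc, div_eq_mul_inv]
    _ ≤ k.factorial := Stirling.le_factorial_stirling k

lemma poissonWeight_le_inv_sqrt {μ : ℝ} (hμ : 0 < μ) (k : ℕ) : poissonWeight μ k ≤ (√μ)⁻¹ := by
  rw [poissonWeight, inv_eq_one_div, div_le_div_iff₀ (by positivity) (Real.sqrt_pos.2 hμ), one_mul]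
  calc Real.exp (-μ) * μ ^ k * √μ
    _ = √μ * μ ^ k * Real.exp (-μ) := by ring
    _ ≤ k.factorial :=
      (sqrt_mul_pow_mul_exp_neg_le hμ.le k).trans (sqrt_mul_pow_mul_exp_neg_le_factorial k)

lemma factorial_le_stirling {k : ℕ} (hk : 1 ≤ k) :
    (k.factorial : ℝ) ≤ Real.exp 1 * √k * (k / Real.exp 1) ^ k := by
  obtain ⟨n, rfl⟩ := Nat.exists_eq_add_of_le' hk
  have antitone := Stirling.stirlingSeq'_antitone n.zero_le
  simp only [Function.comp, Nat.succ_eq_add_one, zero_add, Stirling.stirlingSeq_one] at antitone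
  rw [Stirling.stirlingSeq, div_le_iff₀ (by positivity), Real.sqrt_mul zero_le_two] at antitone
  refine antitone.trans (le_of_eq ?_)
  field_simp

lemma exp_div_le_poissonWeight {μ : ℝ} (hμ : 0 < μ) {k : ℕ} (hk : 1 ≤ k) :
    Real.exp (-((k - μ) ^ 2 / μ)) / (Real.exp 1 * √k) ≤ poissonWeight μ k := by
  have k_pos : (0 : ℝ) < k := by exact_mod_cast hk
  rw [poissonWeight, div_le_div_iff₀ (by positivity) (by positivity)]
  calc Real.exp (-((k - μ) ^ 2 / μ)) * k.factorial
    _ ≤ Real.exp (-((k - μ) ^ 2 / μ)) * (Real.exp 1 * √k * (k / Real.exp 1) ^ k) := by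
      gcongr
      exact factorial_le_stirling hk
    _ ≤ Real.exp (-((k - μ) ^ 2 / μ)) * (Real.exp 1 * √k *
        (μ ^ k * Real.exp (k * (k / μ - 1)) * Real.exp (-k))) := by
      rw [div_pow, ← Real.exp_nat_mul, mul_one, Real.exp_neg (k : ℝ), ← div_eq_mul_inv]
      gcongr
      exact pow_le_pow_mul_exp k_pos.le hμ k
    _ = Real.exp (-((k - μ) ^ 2 / μ) + k * (k / μ - 1) + -k) *
        (Real.exp 1 * √k * μ ^ k) := by
      rw [Real.exp_add, Real.exp_add]
      ring
    _ = Real.exp (-μ) * μ ^ k * (Real.exp 1 * √k) := by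
      rw [mul_comm (Real.exp 1 * √k), ← mul_assoc]
      congr 3
      field_simp
      ring

lemma le_poissonWeight_of_le_add_three_mul_sqrt {μ : ℝ} (hμ : 1 ≤ μ) {k : ℕ} (hμk : μ ≤ k)
    (hk : k ≤ μ + 3 * √μ) : Real.exp (-10) / (2 * √μ) ≤ poissonWeight μ k := by
  have μ_pos : 0 < μ := by linarith
  have sq_sqrt : √μ ^ 2 = μ := Real.sq_sqrt μ_pos.le
  have sqrt_ge : 1 ≤ √μ := Real.one_le_sqrt.2 hμ
  have k_pos : (0 : ℝ) < k := by linarith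
  have deviation : (k - μ) ^ 2 / μ ≤ 9 := by
    rw [div_le_iff₀ μ_pos]
    nlinarith
  have scale : √k ≤ 2 * √μ := Real.sqrt_le_iff.2 ⟨by positivity, by nlinarith⟩
  calc Real.exp (-10) / (2 * √μ)
    _ = Real.exp (-9) / (Real.exp 1 * (2 * √μ)) := by
      rw [← div_div (Real.exp (-9)), ← Real.exp_sub]
      norm_num
    _ ≤ Real.exp (-((k - μ) ^ 2 / μ)) / (Real.exp 1 * √k) := by gcongr
    _ ≤ poissonWeight μ k := exp_div_le_poissonWeight μ_pos (by exact_mod_cast k_pos)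

/-! ### The difference of two Poisson variables -/

lemma skellam_neg (μ ν : ℝ) (n : ℤ) : skellam μ ν (-n) = skellam ν μ n := by
  rw [skellam, skellam, ENNReal.tsum_comm]
  refine tsum_congr fun b => tsum_congr fun a => ?_
  rw [mul_comm]
  congr 1
  grind

lemma skellam_natCast (μ ν : ℝ) (n : ℕ) :
    skellam μ ν n =
      ∑' b : ℕ, ENNReal.ofReal (poissonWeight μ (b + n) * poissonWeight ν b) := by
  rw [skellam, ENNReal.tsum_comm]
  refine tsum_congr fun b => ?_
  rw [tsum_eq_single (b + n) fun a ha => if_neg (by omega), if_pos (by push_cast; ring)]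

lemma poissonWeight_tilt (μ l : ℝ) (k : ℕ) :
    poissonWeight μ k =
      Real.exp (μ * (Real.exp l - 1) - l * k) * poissonWeight (μ * Real.exp l) k := by
  have split_exp : Real.exp (-μ) = Real.exp (μ * (Real.exp l - 1) - l * k) *
      Real.exp (-(μ * Real.exp l)) * Real.exp l ^ k := by
    rw [← Real.exp_nat_mul, ← Real.exp_add, ← Real.exp_add]
    ring_nf
  rw [poissonWeight, poissonWeight, split_exp, mul_pow]
  ring

lemma skellam_tilt (μ ν l : ℝ) (n : ℤ) :
    skellam μ ν n =
      ENNReal.ofReal (Real.exp (μ * (Real.exp l - 1) + ν * (Real.exp (-l) - 1) - l * n)) *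
        skellam (μ * Real.exp l) (ν * Real.exp (-l)) n := by
  simp only [skellam, ← ENNReal.tsum_mul_left, mul_ite, mul_zero,
    ← ENNReal.ofReal_mul (Real.exp_nonneg _)]
  refine tsum_congr fun a => tsum_congr fun b => ite_congr rfl (fun hab => ?_) fun _ => rfl
  rw [poissonWeight_tilt μ l, poissonWeight_tilt ν (-l), mul_mul_mul_comm, ← Real.exp_add, ← hab]
  push_cast
  ring_nf

lemma skellam_le_of_poissonWeight_le {μ ν B : ℝ} (hν : 0 ≤ ν)
    (hB : ∀ k, poissonWeight μ k ≤ B) (n : ℤ) : skellam μ ν n ≤ ENNReal.ofReal B :=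
  calc skellam μ ν n
    _ = ∑' b : ℕ, ∑' a : ℕ, if (a : ℤ) - b = n then
        ENNReal.ofReal (poissonWeight μ a * poissonWeight ν b) else 0 := ENNReal.tsum_comm
    _ ≤ ∑' b : ℕ, ∑' a : ℕ, if a = (n + b).toNat then
        ENNReal.ofReal (B * poissonWeight ν b) else 0 := by
      refine ENNReal.tsum_le_tsum fun b => ENNReal.tsum_le_tsum fun a => ?_
      split_ifs with hab ha
      · gcongr
        · exact poissonWeight_nonneg hν b
        · exact hB a
      · omega
      · exact zero_le
      · exact le_rfl
    _ = ∑' b : ℕ, ENNReal.ofReal (poissonWeight ν b) * ENNReal.ofReal B := by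
      simp only [tsum_ite_eq, mul_comm B, ENNReal.ofReal_mul (poissonWeight_nonneg hν _)]
    _ = ENNReal.ofReal B := by
      rw [ENNReal.tsum_mul_right, tsum_ofReal_poissonWeight hν, one_mul]

/-- The exponent is the price of tilting one mean up and the other one down by the factor
`exp l`; the tilted mean that increased still gives the bound `min 1 (√s)⁻¹`. -/
lemma skellam_self_le {s : ℝ} (hs : 0 < s) (l : ℝ) (n : ℤ) :
    skellam s s n ≤
      ENNReal.ofReal (min 1 (√s)⁻¹ * Real.exp (2 * s * (Real.cosh l - 1) - l * n)) := by
  wlog hl : 0 ≤ l generalizing l n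
  · simpa [skellam_neg] using this (-l) (-n) (by linarith)
  have tilted_weight_le (k : ℕ) : poissonWeight (s * Real.exp l) k ≤ min 1 (√s)⁻¹ := by
    refine le_min (poissonWeight_le_one (by positivity) k) ?_
    refine (poissonWeight_le_inv_sqrt (by positivity) k).trans ?_
    have mean_le : s ≤ s * Real.exp l := le_mul_of_one_le_right hs.le (Real.one_le_exp hl)
    gcongr
  have exponent : 2 * s * (Real.cosh l - 1) - l * n =
      s * (Real.exp l - 1) + s * (Real.exp (-l) - 1) - l * n := by
    rw [Real.cosh_eq]
    ring
  rw [skellam_tilt s s l n, mul_comm (min _ _), ENNReal.ofReal_mul (Real.exp_nonneg _), exponent]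
  gcongr
  exact skellam_le_of_poissonWeight_le (by positivity) tilted_weight_le n

/-- The `⌈√s⌉` values of the second variable directly above `s` already contribute this much. -/
lemma le_skellam_self {s : ℝ} (hs : 1 ≤ s) {n : ℤ} (hn : |(n : ℝ)| ≤ √s) :
    ENNReal.ofReal (Real.exp (-20) / (4 * √s)) ≤ skellam s s n := by
  wlog hn_nonneg : 0 ≤ n generalizing n
  · simpa [skellam_neg] using this (n := -n) (by simpa using hn) (by omega)
  lift n to ℕ using hn_nonneg
  rw [Int.cast_natCast, Nat.abs_cast] at hn
  have sqrt_ge : 1 ≤ √s := Real.one_le_sqrt.2 hs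
  have term_ge (i : ℕ) (hi : i < ⌈√s⌉₊) :
      (Real.exp (-10) / (2 * √s)) ^ 2 ≤
        poissonWeight s (⌈s⌉₊ + i + n) * poissonWeight s (⌈s⌉₊ + i) := by
    have i_le : (i : ℝ) ≤ √s := (Nat.lt_ceil.1 hi).le
    have le_ceil := Nat.le_ceil s
    have ceil_lt := Nat.ceil_lt_add_one (zero_le_one.trans hs)
    rw [sq]
    gcongr
    · exact poissonWeight_nonneg (by linarith) _
    all_goals
      apply le_poissonWeight_of_le_add_three_mul_sqrt hs <;> push_cast <;>
        linarith [i.cast_nonneg (α := ℝ), n.cast_nonneg (α := ℝ)]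
  calc ENNReal.ofReal (Real.exp (-20) / (4 * √s))
    _ = ENNReal.ofReal (√s * (Real.exp (-10) / (2 * √s)) ^ 2) := by
      rw [show (-20 : ℝ) = -10 + -10 by norm_num, Real.exp_add]
      congr 1
      field_simp
      ring
    _ ≤ ENNReal.ofReal (⌈√s⌉₊ * (Real.exp (-10) / (2 * √s)) ^ 2) := by
      gcongr
      exact Nat.le_ceil _
    _ = ∑ i ∈ Finset.range ⌈√s⌉₊, ENNReal.ofReal ((Real.exp (-10) / (2 * √s)) ^ 2) := by
      rw [Finset.sum_const, Finset.card_range, nsmul_eq_mul, ENNReal.ofReal_mul (by positivity),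
        ENNReal.ofReal_natCast]
    _ ≤ ∑ i ∈ Finset.range ⌈√s⌉₊, ENNReal.ofReal
        (poissonWeight s (⌈s⌉₊ + i + n) * poissonWeight s (⌈s⌉₊ + i)) := by
      gcongr with i hi
      exact term_ge i (Finset.mem_range.1 hi)
    _ ≤ skellam s s n := by
      rw [skellam_natCast]
      exact (ENNReal.sum_le_tsum _).trans
        (ENNReal.tsum_comp_le_tsum_of_injective (add_right_injective ⌈s⌉₊) _)

/-! ### The heat kernel -/

lemma nrmZ_nonneg (d : ℕ) (x : Fin d → ℤ) : 0 ≤ nrmZ d x := Real.sqrt_nonneg _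

lemma nrmZ_sq (d : ℕ) (x : Fin d → ℤ) : nrmZ d x ^ 2 = ∑ i, (x i : ℝ) ^ 2 :=
  Real.sq_sqrt (Finset.sum_nonneg fun _ _ => sq_nonneg _)

lemma abs_le_nrmZ {d : ℕ} (x : Fin d → ℤ) (i : Fin d) : |(x i : ℝ)| ≤ nrmZ d x := by
  rw [← Real.sqrt_sq_eq_abs, nrmZ]
  gcongr
  exact Finset.single_le_sum (f := fun i => (x i : ℝ) ^ 2) (fun _ _ => sq_nonneg _)
    (Finset.mem_univ i)

lemma one_le_nrmZ {d : ℕ} {x : Fin d → ℤ} (hx : x ≠ 0) : 1 ≤ nrmZ d x := by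
  obtain ⟨i, hi⟩ := Function.ne_iff.1 hx
  refine le_trans ?_ (abs_le_nrmZ x i)
  exact_mod_cast Int.one_le_abs hi

lemma cosh_sub_one_le_sq {l : ℝ} (hl : |l| ≤ 1) : Real.cosh l - 1 ≤ l ^ 2 := by
  have sq_le : l ^ 2 ≤ 1 := (sq_le_one_iff_abs_le_one l).2 hl
  have abs_half : |l ^ 2 / 2| = l ^ 2 / 2 := abs_of_nonneg (by positivity)
  calc Real.cosh l - 1
    _ ≤ Real.exp (l ^ 2 / 2) - 1 := by gcongr; exact Real.cosh_le_exp_half_sq l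
    _ ≤ |Real.exp (l ^ 2 / 2) - 1| := le_abs_self _
    _ ≤ 2 * |l ^ 2 / 2| := Real.abs_exp_sub_one_le (by rw [abs_half]; linarith)
    _ = l ^ 2 := by rw [abs_half]; ring

lemma heat_le_exp_sum {d : ℕ} {s : ℝ} (hs : 0 < s) {l : Fin d → ℝ} (hl : ∀ i, |l i| ≤ 1)
    (x : Fin d → ℤ) :
    heat d s x ≤
      ENNReal.ofReal (min 1 (√s)⁻¹ ^ d * Real.exp (∑ i, (2 * s * l i ^ 2 - l i * x i))) :=
  calc heat d s x
    _ = ∏ i, skellam s s (x i) := heat_eq_prod d hs.le x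
    _ ≤ ∏ i, ENNReal.ofReal (min 1 (√s)⁻¹ * Real.exp (2 * s * l i ^ 2 - l i * x i)) := by
      gcongr with i
      refine (skellam_self_le hs (l i) (x i)).trans ?_
      gcongr
      exact cosh_sub_one_le_sq (hl i)
    _ = ENNReal.ofReal (min 1 (√s)⁻¹ ^ d * Real.exp (∑ i, (2 * s * l i ^ 2 - l i * x i))) := by
      rw [← ENNReal.ofReal_prod_of_nonneg fun _ _ => by positivity, Finset.prod_mul_distrib,
        Finset.prod_const, Finset.card_univ, Fintype.card_fin, Real.exp_sum]

/-- The coordinates are tilted in the direction of `x`, by a vector of length `l`. -/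
lemma heat_le {d : ℕ} {s : ℝ} (hs : 0 < s) {l : ℝ} (hl₀ : 0 ≤ l) (hl₁ : l ≤ 1)
    (x : Fin d → ℤ) :
    heat d s x ≤
      ENNReal.ofReal (min 1 (√s)⁻¹ ^ d * Real.exp (2 * s * l ^ 2 - l * nrmZ d x)) := by
  set r := nrmZ d x with hr
  have tilt_le_one (i : Fin d) : |l / r * x i| ≤ 1 := by
    rw [div_mul_eq_mul_div, mul_div_assoc, abs_mul, abs_div, abs_of_nonneg hl₀,
      abs_of_nonneg (nrmZ_nonneg d x)]
    exact mul_le_one₀ hl₁ (div_nonneg (abs_nonneg _) (nrmZ_nonneg d x))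
      (div_le_one_of_le₀ (abs_le_nrmZ x i) (nrmZ_nonneg d x))
  refine (heat_le_exp_sum hs tilt_le_one x).trans ?_
  gcongr
  calc ∑ i, (2 * s * (l / r * x i) ^ 2 - l / r * x i * x i)
    _ = 2 * s * (l / r * r) ^ 2 - l / r * r * r := by
      rw [mul_pow _ r, mul_assoc _ r r, ← sq r, hr, nrmZ_sq, Finset.sum_sub_distrib]
      simp only [Finset.mul_sum]
      congr 1 <;> exact Finset.sum_congr rfl fun i _ => by ring
    _ ≤ 2 * s * l ^ 2 - l * r := by
      rcases eq_or_ne r 0 with hr₀ | hr₀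
      · simp only [hr₀, mul_zero]
        nlinarith [mul_nonneg hs.le (sq_nonneg l)]
      · rw [div_mul_cancel₀ l hr₀]

lemma le_heat {d : ℕ} {s : ℝ} (hs : 1 ≤ s) {x : Fin d → ℤ} (hx : nrmZ d x ≤ √s) :
    ENNReal.ofReal ((Real.exp (-20) / (4 * √s)) ^ d) ≤ heat d s x :=
  calc ENNReal.ofReal ((Real.exp (-20) / (4 * √s)) ^ d)
    _ = ∏ _i : Fin d, ENNReal.ofReal (Real.exp (-20) / (4 * √s)) := by
      rw [ENNReal.ofReal_pow (by positivity), Finset.prod_const, Finset.card_univ,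
        Fintype.card_fin]
    _ ≤ ∏ i, skellam s s (x i) := by
      gcongr with i
      exact le_skellam_self hs ((abs_le_nrmZ x i).trans hx)
    _ = heat d s x := (heat_eq_prod d (zero_le_one.trans hs) x).symm

/-! ### Time integrals of the heat kernel -/

lemma integral_mul_exp_neg_mul_poissonWeight {c β : ℝ} (hc : 0 < c) (hβ : 0 ≤ β) (k : ℕ) :
    ∫ s in Set.Ioi (0 : ℝ), s * Real.exp (-(β * s)) * poissonWeight (c * s) k =
      (k + 1) * c ^ k / (c + β) ^ (k + 2) := by
  have gamma : Real.Gamma (k + 2 : ℕ) = (k + 1).factorial := by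
    rw [← Real.Gamma_nat_eq_factorial]
    push_cast
    ring_nf
  calc ∫ s in Set.Ioi (0 : ℝ), s * Real.exp (-(β * s)) * poissonWeight (c * s) k
    _ = ∫ s in Set.Ioi (0 : ℝ), c ^ k / k.factorial *
        (s ^ (((k + 2 : ℕ) : ℝ) - 1) * Real.exp (-((c + β) * s))) := by
      refine setIntegral_congr_fun measurableSet_Ioi fun s _ => ?_
      have exponent : ((k + 2 : ℕ) : ℝ) - 1 = (k + 1 : ℕ) := by push_cast; ring
      rw [poissonWeight, exponent, Real.rpow_natCast,
        show -((c + β) * s) = -(β * s) + -(c * s) by ring, Real.exp_add, mul_pow]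
      ring
    _ = c ^ k / k.factorial * ((1 / (c + β)) ^ (k + 2) * (k + 1).factorial) := by
      rw [integral_const_mul, Real.integral_rpow_mul_exp_neg_mul_Ioi (by positivity)
        (by positivity), Real.rpow_natCast, gamma]
    _ = (k + 1) * c ^ k / (c + β) ^ (k + 2) := by
      rw [Nat.factorial_succ, one_div_pow]
      push_cast
      field_simp

lemma lintegral_mul_exp_neg_mul_poissonWeight {c β : ℝ} (hc : 0 < c) (hβ : 0 ≤ β) (k : ℕ) :
    ∫⁻ s in Set.Ioi (0 : ℝ),
        ENNReal.ofReal (s * Real.exp (-(β * s)) * poissonWeight (c * s) k) =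
      ENNReal.ofReal ((k + 1) * c ^ k / (c + β) ^ (k + 2)) := by
  have value := integral_mul_exp_neg_mul_poissonWeight hc hβ k
  rw [← value, ofReal_integral_eq_lintegral_ofReal]
  · refine Integrable.of_integral_ne_zero ?_
    rw [value]
    positivity
  · filter_upwards [ae_restrict_mem measurableSet_Ioi] with s (hs : 0 < s)
    have weight_nonneg := poissonWeight_nonneg (mul_pos hc hs).le k
    positivity

lemma lintegral_mul_exp_neg_mul_heat {d : ℕ} (hd : 0 < d) {β : ℝ} (hβ : 0 ≤ β)
    (x : Fin d → ℤ) :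
    ∫⁻ s in Set.Ioi (0 : ℝ), ENNReal.ofReal (s * Real.exp (-(β * s))) * heat d s x =
      ∑' k : ℕ, ENNReal.ofReal ((k + 1) * (2 * d) ^ k / (2 * d + β) ^ (k + 2)) * srwP d k x := by
  have weight_measurable (k : ℕ) : Measurable fun s : ℝ =>
      ENNReal.ofReal (s * Real.exp (-(β * s)) * poissonWeight (2 * d * s) k) := by
    unfold poissonWeight
    fun_prop
  calc ∫⁻ s in Set.Ioi (0 : ℝ), ENNReal.ofReal (s * Real.exp (-(β * s))) * heat d s x
    _ = ∫⁻ s in Set.Ioi (0 : ℝ), ∑' k : ℕ,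
        ENNReal.ofReal (s * Real.exp (-(β * s)) * poissonWeight (2 * d * s) k) * srwP d k x := by
      refine setLIntegral_congr_fun measurableSet_Ioi fun s (hs : 0 < s) => ?_
      simp only [heat, ← ENNReal.tsum_mul_left]
      refine tsum_congr fun k => ?_
      rw [← mul_assoc, ← ENNReal.ofReal_mul (by positivity)]
    _ = ∑' k : ℕ, ENNReal.ofReal ((k + 1) * (2 * d) ^ k / (2 * d + β) ^ (k + 2)) *
        srwP d k x := by
      rw [lintegral_tsum fun k => ((weight_measurable k).mul_const _).aemeasurable]
      refine tsum_congr fun k => ?_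
      rw [lintegral_mul_const _ (weight_measurable k),
        lintegral_mul_exp_neg_mul_poissonWeight (by positivity) hβ]

lemma lintegral_mul_heat_le_convE_green {d : ℕ} (hd : 0 < d) (x : Fin d → ℤ) :
    ∫⁻ s in Set.Ioi (0 : ℝ), ENNReal.ofReal s * heat d s x ≤
      convE d (green d) (green d) x := by
  have integral := lintegral_mul_exp_neg_mul_heat hd le_rfl x
  simp only [zero_mul, neg_zero, Real.exp_zero, mul_one, add_zero] at integral
  rw [integral, convE_green]
  gcongr with k
  rw [← ENNReal.ofReal_natCast, ← ENNReal.ofReal_one, ← ENNReal.ofReal_add (by positivity)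
    zero_le_one]
  gcongr
  have one_le : (1 : ℝ) ≤ 2 * d := by
    exact_mod_cast (by omega : 1 ≤ 2 * d)
  rw [div_le_iff₀ (by positivity)]
  gcongr
  omega

lemma one_sub_mul_two_mul_add_le {d : ℕ} (hd : 0 < d) {α : ℝ} (hα₀ : 0 ≤ α) :
    (1 - α) * (2 * d + α) ≤ 2 * d := by
  have one_le : (1 : ℝ) ≤ d := by exact_mod_cast hd
  nlinarith

lemma tsum_killed_srwP_le_lintegral_heat {d : ℕ} (hd : 0 < d) {α : ℝ} (hα₀ : 0 ≤ α) (hα₁ : α ≤ 1)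
    (x : Fin d → ℤ) :
    ∑' k : ℕ, (k : ℝ≥0∞) * ENNReal.ofReal ((1 - α) ^ k) * srwP d k x ≤
      ENNReal.ofReal ((2 * d + 1) ^ 2) *
        ∫⁻ s in Set.Ioi (0 : ℝ), ENNReal.ofReal (s * Real.exp (-(α * s))) * heat d s x := by
  have weight_le (k : ℕ) : k * (1 - α) ^ k ≤
      (2 * d + 1) ^ 2 * ((k + 1) * (2 * d) ^ k / (2 * d + α) ^ (k + 2)) := by
    rw [mul_div_assoc', le_div_iff₀ (by positivity)]
    calc k * (1 - α) ^ k * (2 * d + α) ^ (k + 2)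
      _ = k * ((1 - α) * (2 * d + α)) ^ k * (2 * d + α) ^ 2 := by rw [mul_pow]; ring
      _ ≤ (k + 1) * (2 * d) ^ k * (2 * d + 1) ^ 2 := by
        gcongr ?_ * ?_ * ?_ ^ 2
        · linarith
        · exact pow_le_pow_left₀ (mul_nonneg (by linarith) (by positivity))
            (one_sub_mul_two_mul_add_le hd hα₀) k
        · linarith
      _ = (2 * d + 1) ^ 2 * ((k + 1) * (2 * d) ^ k) := by ring
  rw [lintegral_mul_exp_neg_mul_heat hd hα₀, ← ENNReal.tsum_mul_left]
  refine ENNReal.tsum_le_tsum fun k => ?_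
  rw [← mul_assoc]
  gcongr ?_ * _
  rw [← ENNReal.ofReal_natCast, ← ENNReal.ofReal_mul (by positivity),
    ← ENNReal.ofReal_mul (by positivity)]
  exact ENNReal.ofReal_le_ofReal (weight_le k)

/-- The times between `r ^ 2` and `2 * r ^ 2`, where `r` is the norm of `x`, already contribute
this much. -/
lemma le_convE_green {d : ℕ} (hd : 0 < d) {x : Fin d → ℤ} (hx : x ≠ 0) :
    ENNReal.ofReal ((Real.exp (-20) / 8) ^ d * (nrmZ d x ^ 4 / nrmZ d x ^ d)) ≤
      convE d (green d) (green d) x := by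
  set r := nrmZ d x
  have r_ge : 1 ≤ r := one_le_nrmZ hx
  have heat_ge (s : ℝ) (hs : s ∈ Set.Ioc (r ^ 2) (2 * r ^ 2)) :
      ENNReal.ofReal ((Real.exp (-20) / (8 * r)) ^ d) ≤ heat d s x := by
    have sqrt_ge : r ≤ √s := Real.le_sqrt_of_sq_le hs.1.le
    have sqrt_le : √s ≤ 2 * r := Real.sqrt_le_iff.2 ⟨by positivity, by nlinarith [hs.2]⟩
    refine le_trans ?_ (le_heat (by nlinarith [hs.1]) sqrt_ge)
    gcongr ENNReal.ofReal (?_ ^ d)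
    exact div_le_div_of_nonneg_left (by positivity) (by linarith) (by linarith)
  calc ENNReal.ofReal ((Real.exp (-20) / 8) ^ d * (r ^ 4 / r ^ d))
    _ = ∫⁻ _s in Set.Ioc (r ^ 2) (2 * r ^ 2),
        ENNReal.ofReal (r ^ 2) * ENNReal.ofReal ((Real.exp (-20) / (8 * r)) ^ d) := by
      rw [setLIntegral_const, Real.volume_Ioc, ← ENNReal.ofReal_mul (by positivity),
        ← ENNReal.ofReal_mul (by positivity), div_pow, div_pow, mul_pow]
      congr 1
      field_simp
      ring
    _ ≤ ∫⁻ s in Set.Ioc (r ^ 2) (2 * r ^ 2), ENNReal.ofReal s * heat d s x := by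
      refine setLIntegral_mono' measurableSet_Ioc fun s hs => ?_
      gcongr
      · exact hs.1.le
      · exact heat_ge s hs
    _ ≤ ∫⁻ s in Set.Ioi (0 : ℝ), ENNReal.ofReal s * heat d s x :=
      lintegral_mono_set fun s hs => lt_of_le_of_lt (by positivity) hs.1
    _ ≤ convE d (green d) (green d) x := lintegral_mul_heat_le_convE_green hd x

/-! ### Decay of the killed sum -/

lemma pow_mul_exp_neg_le_factorial {y : ℝ} (hy : 0 ≤ y) (n : ℕ) :
    y ^ n * Real.exp (-y) ≤ n.factorial := by
  rw [Real.exp_neg, ← div_eq_mul_inv, div_le_iff₀ (Real.exp_pos y), mul_comm,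
    ← div_le_iff₀ (by positivity)]
  exact Real.pow_div_factorial_le_exp y hy n

lemma heat_le_of_four_mul_le {d : ℕ} {s : ℝ} (hs : 0 < s) {x : Fin d → ℤ} (hx : 4 * s ≤ nrmZ d x) :
    heat d s x ≤
      ENNReal.ofReal (4 ^ d * d.factorial / nrmZ d x ^ d * Real.exp (-(nrmZ d x / 4))) := by
  refine (heat_le hs zero_le_one le_rfl x).trans ?_
  set r := nrmZ d x
  have r_pos : 0 < r := by linarith
  refine ENNReal.ofReal_le_ofReal ?_
  calc min 1 (√s)⁻¹ ^ d * Real.exp (2 * s * 1 ^ 2 - 1 * r)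
    _ ≤ 1 ^ d * Real.exp (-(r / 4) + -(r / 4)) := by
      gcongr
      · exact min_le_left _ _
      · linarith
    _ = 4 ^ d / r ^ d * ((r / 4) ^ d * Real.exp (-(r / 4))) * Real.exp (-(r / 4)) := by
      rw [Real.exp_add, one_pow, div_pow]
      field_simp
    _ ≤ 4 ^ d / r ^ d * d.factorial * Real.exp (-(r / 4)) := by
      gcongr
      exact pow_mul_exp_neg_le_factorial (by positivity) d
    _ = 4 ^ d * d.factorial / r ^ d * Real.exp (-(r / 4)) := by ring

/-- The tilt `r / (4 * s)`, where `r` is the norm of `x`, minimizes the exponent in `heat_le`; half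
of the resulting decay absorbs the factor `(√s)⁻¹ ^ d`. -/
lemma heat_le_of_le_four_mul {d : ℕ} {s : ℝ} {x : Fin d → ℤ} (hx₀ : x ≠ 0)
    (hx : nrmZ d x ≤ 4 * s) :
    heat d s x ≤ ENNReal.ofReal
      (4 ^ d * d.factorial * Real.exp 1 / nrmZ d x ^ d *
        Real.exp (-(nrmZ d x ^ 2 / (16 * s)))) := by
  have r_pos : 0 < nrmZ d x := zero_lt_one.trans_le (one_le_nrmZ hx₀)
  have s_pos : 0 < s := by linarith
  refine (heat_le s_pos (l := nrmZ d x / (4 * s)) (by positivity)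
    (div_le_one_of_le₀ hx (by positivity)) x).trans ?_
  set r := nrmZ d x
  set t := r / (4 * √s) with ht
  have t_sq : t ^ 2 = r ^ 2 / (16 * s) := by
    rw [ht, div_pow, mul_pow, Real.sq_sqrt s_pos.le]
    norm_num
  have sqrt_inv : (√s)⁻¹ = 4 * t / r := by
    rw [ht]
    field_simp
  have tilt : 2 * s * (r / (4 * s)) ^ 2 - r / (4 * s) * r = -(2 * (r ^ 2 / (16 * s))) := by
    field_simp
    ring
  refine ENNReal.ofReal_le_ofReal ?_
  rw [tilt, ← t_sq]
  calc min 1 (√s)⁻¹ ^ d * Real.exp (-(2 * t ^ 2))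
    _ ≤ (4 * t / r) ^ d * Real.exp (-t + 1 + -t ^ 2) := by
      gcongr
      · exact sqrt_inv ▸ min_le_right _ _
      · nlinarith [sq_nonneg (2 * t - 1)]
    _ = 4 ^ d / r ^ d * (t ^ d * Real.exp (-t)) * Real.exp 1 * Real.exp (-t ^ 2) := by
      rw [Real.exp_add, Real.exp_add, div_pow, mul_pow]
      ring
    _ ≤ 4 ^ d / r ^ d * d.factorial * Real.exp 1 * Real.exp (-t ^ 2) := by
      gcongr
      exact pow_mul_exp_neg_le_factorial (by positivity) d
    _ = 4 ^ d * d.factorial * Real.exp 1 / r ^ d * Real.exp (-t ^ 2) := by ring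

lemma exp_neg_mul_heat_le {d : ℕ} {α s : ℝ} (hα₀ : 0 ≤ α) (hα₁ : α ≤ 1) (hs : 0 < s)
    {x : Fin d → ℤ} (hx : x ≠ 0) :
    ENNReal.ofReal (Real.exp (-(α * s))) * heat d s x ≤ ENNReal.ofReal
      (4 ^ d * d.factorial * Real.exp 1 / nrmZ d x ^ d * Real.exp (-(√α * nrmZ d x / 4))) := by
  have r_pos : 0 < nrmZ d x := zero_lt_one.trans_le (one_le_nrmZ hx)
  set r := nrmZ d x with hr
  rcases le_total (4 * s) r with hsr | hsr
  · have sqrt_le_one : √α ≤ 1 := Real.sqrt_le_one.2 hα₁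
    grw [heat_le_of_four_mul_le hs hsr, ← ENNReal.ofReal_mul (by positivity), ← hr]
    refine ENNReal.ofReal_le_ofReal ?_
    calc Real.exp (-(α * s)) * (4 ^ d * d.factorial / r ^ d * Real.exp (-(r / 4)))
      _ ≤ 1 * (4 ^ d * (d.factorial * Real.exp 1) / r ^ d * Real.exp (-(√α * r / 4))) := by
        gcongr
        · exact Real.exp_le_one_iff.2 (neg_nonpos.2 (by positivity))
        · exact le_mul_of_one_le_right (by positivity) (Real.one_le_exp zero_le_one)
        · exact mul_le_of_le_one_left r_pos.le sqrt_le_one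
      _ = 4 ^ d * d.factorial * Real.exp 1 / r ^ d * Real.exp (-(√α * r / 4)) := by ring
  · have am_gm : √α * r / 4 ≤ α * s + r ^ 2 / (16 * s) := by
      have square : α * s + r ^ 2 / (16 * s) - √α * r / 2 = (√α * √s - r / (4 * √s)) ^ 2 := by
        rw [sub_sq, mul_pow, div_pow, mul_pow, Real.sq_sqrt hα₀, Real.sq_sqrt hs.le]
        field_simp
        ring
      nlinarith [sq_nonneg (√α * √s - r / (4 * √s)), mul_nonneg (Real.sqrt_nonneg α) r_pos.le]
    grw [heat_le_of_le_four_mul hx hsr, ← ENNReal.ofReal_mul (by positivity), ← hr]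
    refine ENNReal.ofReal_le_ofReal ?_
    rw [mul_left_comm, ← Real.exp_add]
    gcongr
    linarith

lemma lintegral_Ioi_mul_inv_sqrt_pow {d : ℕ} (hd : 4 < d) {r : ℝ} (hr : 0 < r) :
    ∫⁻ s in Set.Ioi (r ^ 2), ENNReal.ofReal (s * (√s)⁻¹ ^ d) =
      ENNReal.ofReal (r ^ 4 / r ^ d / (d / 2 - 2)) := by
  have hd' : (5 : ℝ) ≤ d := by exact_mod_cast hd
  have exponent_lt : (1 - d / 2 : ℝ) < -1 := by linarith
  have sq_pos : 0 < r ^ 2 := by positivity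
  calc ∫⁻ s in Set.Ioi (r ^ 2), ENNReal.ofReal (s * (√s)⁻¹ ^ d)
    _ = ∫⁻ s in Set.Ioi (r ^ 2), ENNReal.ofReal (s ^ (1 - d / 2 : ℝ)) := by
      refine setLIntegral_congr_fun measurableSet_Ioi fun s hs => ?_
      have s_pos : 0 < s := sq_pos.trans hs
      rw [Real.rpow_sub s_pos, Real.rpow_one, inv_pow, Real.sqrt_eq_rpow,
        ← Real.rpow_mul_natCast s_pos.le, div_eq_mul_inv]
      ring_nf
    _ = ENNReal.ofReal (∫ s in Set.Ioi (r ^ 2), s ^ (1 - d / 2 : ℝ)) := by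
      refine (ofReal_integral_eq_lintegral_ofReal
        (integrableOn_Ioi_rpow_of_lt exponent_lt sq_pos) ?_).symm
      filter_upwards [ae_restrict_mem measurableSet_Ioi] with s hs
      exact Real.rpow_nonneg (sq_pos.trans hs).le _
    _ = ENNReal.ofReal (r ^ 4 / r ^ d / (d / 2 - 2)) := by
      have power : (r ^ 2) ^ (1 - d / 2 + 1 : ℝ) = r ^ 4 / r ^ d := by
        rw [← Real.rpow_natCast r 2, ← Real.rpow_mul hr.le, ← Real.rpow_natCast r 4,
          ← Real.rpow_natCast r d, ← Real.rpow_sub hr]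
        congr 1
        push_cast
        ring
      rw [integral_Ioi_rpow_of_lt exponent_lt sq_pos, power, neg_div, ← div_neg]
      ring_nf

lemma setLIntegral_Ioc_mul_heat_le {d : ℕ} {α : ℝ} (hα₀ : 0 ≤ α) (hα₁ : α ≤ 1) {x : Fin d → ℤ}
    (hx : x ≠ 0) :
    ∫⁻ s in Set.Ioc 0 (nrmZ d x ^ 2), ENNReal.ofReal (s * Real.exp (-(α * s))) * heat d s x ≤
      ENNReal.ofReal (4 ^ d * d.factorial * Real.exp 1 * Real.exp (-(√α * nrmZ d x / 4)) *
        (nrmZ d x ^ 4 / nrmZ d x ^ d)) := by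
  have r_pos : 0 < nrmZ d x := zero_lt_one.trans_le (one_le_nrmZ hx)
  set r := nrmZ d x
  calc ∫⁻ s in Set.Ioc 0 (r ^ 2), ENNReal.ofReal (s * Real.exp (-(α * s))) * heat d s x
    _ ≤ ∫⁻ _s in Set.Ioc 0 (r ^ 2), ENNReal.ofReal (r ^ 2) * ENNReal.ofReal
        (4 ^ d * d.factorial * Real.exp 1 / r ^ d * Real.exp (-(√α * r / 4))) := by
      refine setLIntegral_mono' measurableSet_Ioc fun s hs => ?_
      rw [ENNReal.ofReal_mul hs.1.le, mul_assoc]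
      gcongr
      · exact hs.2
      · exact exp_neg_mul_heat_le hα₀ hα₁ hs.1 hx
    _ = ENNReal.ofReal (4 ^ d * d.factorial * Real.exp 1 * Real.exp (-(√α * r / 4)) *
        (r ^ 4 / r ^ d)) := by
      rw [setLIntegral_const, Real.volume_Ioc, ← ENNReal.ofReal_mul (by positivity),
        ← ENNReal.ofReal_mul (by positivity)]
      congr 1
      ring

lemma setLIntegral_Ioi_mul_heat_le {d : ℕ} (hd : 4 < d) {α : ℝ} (hα : 0 ≤ α) {x : Fin d → ℤ}
    (hx : x ≠ 0) :
    ∫⁻ s in Set.Ioi (nrmZ d x ^ 2), ENNReal.ofReal (s * Real.exp (-(α * s))) * heat d s x ≤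
      ENNReal.ofReal (2 * Real.exp (-(α * nrmZ d x ^ 2)) * (nrmZ d x ^ 4 / nrmZ d x ^ d)) := by
  have r_pos : 0 < nrmZ d x := zero_lt_one.trans_le (one_le_nrmZ hx)
  have half_sub_two_ge : 1 / 2 ≤ (d / 2 - 2 : ℝ) := by
    have five_le : (5 : ℝ) ≤ d := by exact_mod_cast hd
    linarith
  have heat_le_inv_sqrt_pow {s : ℝ} (hs : 0 < s) : heat d s x ≤ ENNReal.ofReal ((√s)⁻¹ ^ d) := by
    refine (heat_le hs le_rfl zero_le_one x).trans (ENNReal.ofReal_le_ofReal ?_)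
    simp only [ne_eq, OfNat.ofNat_ne_zero, not_false_eq_true, zero_pow, mul_zero, zero_mul,
      sub_zero, Real.exp_zero, mul_one]
    gcongr
    exact min_le_right _ _
  set r := nrmZ d x
  calc ∫⁻ s in Set.Ioi (r ^ 2), ENNReal.ofReal (s * Real.exp (-(α * s))) * heat d s x
    _ ≤ ∫⁻ s in Set.Ioi (r ^ 2), ENNReal.ofReal (Real.exp (-(α * r ^ 2))) *
        ENNReal.ofReal (s * (√s)⁻¹ ^ d) := by
      refine setLIntegral_mono' measurableSet_Ioi fun s (hs : r ^ 2 < s) => ?_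
      have s_pos : 0 < s := (by positivity : 0 < r ^ 2).trans hs
      rw [mul_comm s, ENNReal.ofReal_mul (by positivity), ENNReal.ofReal_mul s_pos.le, mul_assoc]
      gcongr
      exact heat_le_inv_sqrt_pow s_pos
    _ = ENNReal.ofReal (Real.exp (-(α * r ^ 2)) * (r ^ 4 / r ^ d / (d / 2 - 2))) := by
      rw [lintegral_const_mul _ (by fun_prop), lintegral_Ioi_mul_inv_sqrt_pow hd r_pos,
        ← ENNReal.ofReal_mul (by positivity)]
    _ ≤ ENNReal.ofReal (Real.exp (-(α * r ^ 2)) * (r ^ 4 / r ^ d / (1 / 2))) := by gcongr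
    _ = ENNReal.ofReal (2 * Real.exp (-(α * r ^ 2)) * (r ^ 4 / r ^ d)) := by ring_nf

lemma lintegral_mul_exp_neg_mul_heat_le {d : ℕ} (hd : 4 < d) {α : ℝ} (hα₀ : 0 ≤ α) (hα₁ : α ≤ 1)
    {x : Fin d → ℤ} (hx : x ≠ 0) :
    ∫⁻ s in Set.Ioi (0 : ℝ), ENNReal.ofReal (s * Real.exp (-(α * s))) * heat d s x ≤
      ENNReal.ofReal ((4 ^ d * d.factorial * Real.exp 1 + 2) *
        (Real.exp (-(√α * nrmZ d x / 4)) + Real.exp (-(α * nrmZ d x ^ 2))) *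
        (nrmZ d x ^ 4 / nrmZ d x ^ d)) := by
  have r_nonneg := nrmZ_nonneg d x
  rw [← Set.Ioc_union_Ioi_eq_Ioi (sq_nonneg (nrmZ d x))]
  grw [lintegral_union_le, setLIntegral_Ioc_mul_heat_le hα₀ hα₁ hx,
    setLIntegral_Ioi_mul_heat_le hd hα₀ hx, ← ENNReal.ofReal_add (by positivity) (by positivity),
    ← add_mul]
  gcongr
  nlinarith [mul_pos (show (0 : ℝ) < 4 ^ d * d.factorial * Real.exp 1 by positivity)
    (Real.exp_pos (-(α * nrmZ d x ^ 2))), Real.exp_pos (-(√α * nrmZ d x / 4))]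

lemma exists_tsum_killed_srwP_le {d : ℕ} (hd : 4 < d) :
    ∃ K : ℝ, 0 < K ∧ ∀ α : ℝ, 0 ≤ α → α ≤ 1 → ∀ x : Fin d → ℤ, x ≠ 0 →
      ∑' k : ℕ, (k : ℝ≥0∞) * ENNReal.ofReal ((1 - α) ^ k) * srwP d k x ≤
        ENNReal.ofReal (K * (Real.exp (-(√α * nrmZ d x / 4)) + Real.exp (-(α * nrmZ d x ^ 2)))) *
          convE d (green d) (green d) x := by
  have hd₀ : 0 < d := by omega
  set A : ℝ := (2 * d + 1) ^ 2 * (4 ^ d * d.factorial * Real.exp 1 + 2)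
  set B : ℝ := (Real.exp (-20) / 8) ^ d
  have B_pos : 0 < B := by positivity
  refine ⟨A / B, by positivity, fun α hα₀ hα₁ x hx => ?_⟩
  have r_pos : 0 < nrmZ d x := zero_lt_one.trans_le (one_le_nrmZ hx)
  set r := nrmZ d x
  set E := Real.exp (-(√α * r / 4)) + Real.exp (-(α * r ^ 2))
  calc ∑' k : ℕ, (k : ℝ≥0∞) * ENNReal.ofReal ((1 - α) ^ k) * srwP d k x
    _ ≤ ENNReal.ofReal ((2 * d + 1) ^ 2) *
        ∫⁻ s in Set.Ioi (0 : ℝ), ENNReal.ofReal (s * Real.exp (-(α * s))) * heat d s x :=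
      tsum_killed_srwP_le_lintegral_heat hd₀ hα₀ hα₁ x
    _ ≤ ENNReal.ofReal ((2 * d + 1) ^ 2) *
        ENNReal.ofReal ((4 ^ d * d.factorial * Real.exp 1 + 2) * E * (r ^ 4 / r ^ d)) := by
      gcongr
      exact lintegral_mul_exp_neg_mul_heat_le hd hα₀ hα₁ hx
    _ = ENNReal.ofReal (A / B * E) * ENNReal.ofReal (B * (r ^ 4 / r ^ d)) := by
      rw [← ENNReal.ofReal_mul (by positivity), ← ENNReal.ofReal_mul (by positivity)]
      congr 1
      simp only [A]
      field_simp
    _ ≤ ENNReal.ofReal (A / B * E) * convE d (green d) (green d) x := by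
      gcongr
      exact le_convE_green hd₀ hx

lemma exp_neg_add_exp_neg_sq_le {c₀ t : ℝ} (ht₀ : 0 ≤ t) (ht : c₀ ≤ t) :
    Real.exp (-(t / 4)) + Real.exp (-t ^ 2) ≤ 2 * Real.exp (-(min (1 / 4) c₀ * t)) := by
  have le_quarter : min (1 / 4) c₀ * t ≤ 1 / 4 * t := by gcongr; exact min_le_left _ _
  have le_sq : min (1 / 4) c₀ * t ≤ t * t := by gcongr; exact (min_le_right _ _).trans ht
  rw [two_mul]
  gcongr <;> linarith

lemma exists_tsum_killed_srwP_le_exp {d : ℕ} (hd : 4 < d) {c₀ : ℝ} (hc₀ : 0 < c₀) :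
    ∃ C : ℝ, 0 < C ∧ ∀ α : ℝ, 0 < α → α ≤ 1 → ∀ x : Fin d → ℤ, c₀ / √α ≤ nrmZ d x →
      ∑' k : ℕ, (k : ℝ≥0∞) * ENNReal.ofReal ((1 - α) ^ k) * srwP d k x ≤
        ENNReal.ofReal (C * Real.exp (-(min (1 / 4) c₀ * nrmZ d x * √α))) *
          convE d (green d) (green d) x := by
  obtain ⟨K, K_pos, killed_le⟩ := exists_tsum_killed_srwP_le hd
  refine ⟨2 * K, by positivity, fun α hα₀ hα₁ x hx => ?_⟩
  have sqrt_pos : 0 < √α := Real.sqrt_pos.2 hα₀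
  have x_ne_zero : x ≠ 0 := by
    rintro rfl
    exact absurd hx (by simp [nrmZ, hc₀, sqrt_pos])
  have exp_le := exp_neg_add_exp_neg_sq_le (mul_nonneg sqrt_pos.le (nrmZ_nonneg d x))
    ((div_le_iff₀' sqrt_pos).1 hx)
  rw [mul_pow, Real.sq_sqrt hα₀.le] at exp_le
  grw [killed_le α hα₀.le hα₁ x x_ne_zero, exp_le]
  exact le_of_eq (by ring_nf)

/-- For `d > 4`:
(i) there are constants `0 < c ≤ C` (depending only on `d`) with
`c(g⋆g)(x) ≤ Σ_k k·P(X_k = x) ≤ C(g⋆g)(x)` for all `x`, and consequently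
`Σ_k k(1−α)^k P(X_k = x) ≤ C(g⋆g)(x)` for every `α ∈ (0,1)`;
(ii) for every `c₀ > 0` there are `c₁, C' > 0` and `α₀ ∈ (0,1)` (depending only on `d, c₀`)
such that for `α ∈ (0,α₀)` and `‖x‖ ≥ c₀/√α`:
`Σ_k k(1−α)^k P(X_k = x) ≤ C' e^{−c₁‖x‖√α}(g⋆g)(x)`. -/
theorem weighted_green_bounds (d : ℕ) (hd : 4 < d) :
    (∃ c C : ℝ, 0 < c ∧ c ≤ C ∧ ∀ x : Fin d → ℤ,
      (ENNReal.ofReal c * convE d (green d) (green d) x ≤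
          ∑' k : ℕ, (k : ENNReal) * srwP d k x ∧
        ∑' k : ℕ, (k : ENNReal) * srwP d k x ≤
          ENNReal.ofReal C * convE d (green d) (green d) x) ∧
      ∀ α ∈ Set.Ioo (0 : ℝ) 1,
        ∑' k : ℕ, (k : ENNReal) * ENNReal.ofReal ((1 - α) ^ k) * srwP d k x ≤
          ENNReal.ofReal C * convE d (green d) (green d) x) ∧
    ∀ c₀ : ℝ, 0 < c₀ →
      ∃ c₁ C' α₀ : ℝ, 0 < c₁ ∧ 0 < C' ∧ α₀ ∈ Set.Ioo (0 : ℝ) 1 ∧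
        ∀ α ∈ Set.Ioo (0 : ℝ) α₀, ∀ x : Fin d → ℤ, c₀ / Real.sqrt α ≤ nrmZ d x →
          ∑' k : ℕ, (k : ENNReal) * ENNReal.ofReal ((1 - α) ^ k) * srwP d k x ≤
            ENNReal.ofReal (C' * Real.exp (-(c₁ * nrmZ d x * Real.sqrt α))) *
              convE d (green d) (green d) x := by
  refine ⟨⟨1 / (2 * d ^ 2 + 2), 1, by positivity, ?_, fun x => ⟨⟨?_, ?_⟩, fun α hα => ?_⟩⟩,
    fun c₀ hc₀ => ?_⟩
  · exact div_le_one_of_le₀ (by nlinarith [sq_nonneg (d : ℝ)]) (by positivity)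
  · exact ofReal_mul_convE_green_le_tsum (by omega) x
  · grw [tsum_natCast_mul_srwP_le_convE_green, ENNReal.ofReal_one, one_mul]
  · grw [tsum_killed_le hα.1.le hα.2.le, tsum_natCast_mul_srwP_le_convE_green,
      ENNReal.ofReal_one, one_mul]
  · obtain ⟨C', C'_pos, killed_le⟩ := exists_tsum_killed_srwP_le_exp hd hc₀
    exact ⟨min (1 / 4) c₀, C', 1 / 2, by positivity, C'_pos, by norm_num,
      fun α hα => killed_le α hα.1 (by linarith [hα.2])⟩
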